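/- arXiv:1712.01172 — 5 statements merged into one kernel-verified Lean document; each statement's English description precedes it below -/
import Mathlib

section
/- For every real c > 0, every natural number K, every real number a, and all real numbers b_1, …, b_K, one has (a + Σ_{k=1}^K b_k)^2 ≤ (1 + 1/c)·a^2 + (1 + 1/c)·Σ_{k=1}^K (1+c)^k·b_k^2. -/
theorem wbi_range (c : ℝ) (hc : 0 < c) (K : ℕ) : ∀ (a : ℝ) (b : ℕ → ℝ),
    (a + ∑ k ∈ Finset.range K, b k) ^ 2 ≤
      (1 + 1 / c) * a ^ 2 +
        (1 + 1 / c) * ∑ k ∈ Finset.range K, (1 + c) ^ (k + 1) * b k ^ 2 := by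
  have hd : 0 < 1 / c := by positivity
  induction K with
  | zero =>
    intro a b
    simp only [Finset.range_zero, Finset.sum_empty]
    nlinarith [mul_nonneg hd.le (sq_nonneg a)]
  | succ K ih =>
    intro a b
    have h := ih (b 0) (fun k => b (k + 1))
    rw [Finset.sum_range_succ', Finset.sum_range_succ']
    have e : ∑ k ∈ Finset.range K, (1 + c) ^ (k + 1 + 1) * b (k + 1) ^ 2
        = (1 + c) * ∑ k ∈ Finset.range K, (1 + c) ^ (k + 1) * b (k + 1) ^ 2 := by
      rw [Finset.mul_sum]
      exact Finset.sum_congr rfl fun k _ => by ring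
    rw [e]
    generalize ∑ k ∈ Finset.range K, (1 + c) ^ (k + 1) * b (k + 1) ^ 2 = Q at *
    generalize ∑ k ∈ Finset.range K, b (k + 1) = T at *
    have h1 := mul_le_mul_of_nonneg_left h (by linarith : 0 ≤ 1 + c)
    have h2 : (a + (T + b 0)) ^ 2 ≤ (1 + 1 / c) * a ^ 2 + (1 + c) * (b 0 + T) ^ 2 := by
      have h3 : (1 + 1 / c) * a ^ 2 + (1 + c) * (b 0 + T) ^ 2 - (a + (T + b 0)) ^ 2
          = 1 / c * (a - c * (b 0 + T)) ^ 2 := by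
        field_simp
        ring
      have : 0 ≤ 1 / c * (a - c * (b 0 + T)) ^ 2 := by positivity
      linarith
    refine h2.trans ?_
    have h4 : (1 + 1 / c) * ((1 + c) * Q + (1 + c) ^ (0 + 1) * b 0 ^ 2)
        = (1 + c) * ((1 + 1 / c) * b 0 ^ 2 + (1 + 1 / c) * Q) := by ring
    rw [h4]
    linarith

theorem weighted_binomial_inequality
    (c : ℝ) (hc : 0 < c) (K : ℕ) (a : ℝ) (b : ℕ → ℝ) :
    (a + ∑ k ∈ Finset.Icc 1 K, b k) ^ 2 ≤
      (1 + 1 / c) * a ^ 2 +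
        (1 + 1 / c) * ∑ k ∈ Finset.Icc 1 K, (1 + c) ^ k * b k ^ 2 := by
  have key : ∀ f : ℕ → ℝ, ∑ k ∈ Finset.Icc 1 K, f k = ∑ k ∈ Finset.range K, f (k + 1) := by
    intro f
    induction K with
    | zero => simp
    | succ n ih => rw [Finset.sum_Icc_succ_top (by omega), ih, Finset.sum_range_succ]
  rw [key, key]
  exact wbi_range c hc K a (fun k => b (k + 1))
end

section
/- Let c > 0 be real, K a natural number, a a real number, and for each k = 1, …, K let C_k be a positive natural number and let j_{k,1}, …, j_{k,n_k} be real numbers with n_k ≤ C_k. Then (a + Σ_{k=1}^K Σ_{i=1}^{n_k} j_{k,i})^2 ≤ (1 + 1/c)·a^2 + (1 + 1/c)·Σ_{k=1}^K (1+c)^k·C_k·Σ_{i=1}^{n_k} j_{k,i}^2. -/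
theorem fundamental_estimate_algebraic
    (c : ℝ) (hc : 0 < c) (K : ℕ) (a : ℝ) (C n : ℕ → ℕ)
    (hC : ∀ k ∈ Finset.Icc 1 K, 0 < C k)
    (hn : ∀ k ∈ Finset.Icc 1 K, n k ≤ C k)
    (j : ℕ → ℕ → ℝ) :
    (a + ∑ k ∈ Finset.Icc 1 K, ∑ i ∈ Finset.range (n k), j k i) ^ 2 ≤
      (1 + 1 / c) * a ^ 2 +
        (1 + 1 / c) * ∑ k ∈ Finset.Icc 1 K, (1 + c) ^ k * (C k : ℝ) *
          ∑ i ∈ Finset.range (n k), j k i ^ 2 := by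
  have h1c : 0 < 1 + c := by linarith
  have geo : ∀ m : ℕ, ∑ k ∈ Finset.Icc 1 m, ((1 + c) ^ k)⁻¹ = (1 - ((1 + c) ^ m)⁻¹) / c := by
    intro m
    induction m with
    | zero => simp
    | succ m ih =>
      rw [Finset.sum_Icc_succ_top (by omega), ih, pow_succ]
      have : (1 + c) ^ m ≠ 0 := by positivity
      field_simp
      ring
  set B : ℝ := ∑ k ∈ Finset.Icc 1 K, ∑ i ∈ Finset.range (n k), j k i with hB
  set T : ℝ := ∑ k ∈ Finset.Icc 1 K, (1 + c) ^ k * (C k : ℝ) *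
          ∑ i ∈ Finset.range (n k), j k i ^ 2 with hT
  have hCS : B ^ 2 ≤ (∑ k ∈ Finset.Icc 1 K, ((1 + c) ^ k)⁻¹) *
      ∑ k ∈ Finset.Icc 1 K, (1 + c) ^ k * (∑ i ∈ Finset.range (n k), j k i) ^ 2 := by
    apply Finset.sum_sq_le_sum_mul_sum_of_sq_eq_mul
    · intro k _; positivity
    · intro k _; positivity
    · intro k _
      have : (1 + c) ^ k ≠ 0 := by positivity
      field_simp
  have hle : ∑ k ∈ Finset.Icc 1 K, (1 + c) ^ k * (∑ i ∈ Finset.range (n k), j k i) ^ 2 ≤ T := by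
    apply Finset.sum_le_sum
    intro k hk
    rw [mul_assoc]
    apply mul_le_mul_of_nonneg_left _ (by positivity)
    have h1 := sq_sum_le_card_mul_sum_sq (s := Finset.range (n k)) (f := j k)
    rw [Finset.card_range] at h1
    refine h1.trans (mul_le_mul_of_nonneg_right ?_ (Finset.sum_nonneg fun i _ => sq_nonneg _))
    exact_mod_cast hn k hk
  have hg : ∑ k ∈ Finset.Icc 1 K, ((1 + c) ^ k)⁻¹ ≤ 1 / c := by
    rw [geo]
    have : 0 < ((1 + c) ^ K)⁻¹ := by positivity
    gcongr
    linarith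
  have hBT : B ^ 2 ≤ 1 / c * T :=
    hCS.trans (mul_le_mul hg hle (Finset.sum_nonneg fun k _ => by positivity) (by positivity))
  have h2 : (a + B) ^ 2 ≤ (1 + 1 / c) * a ^ 2 + (1 + c) * B ^ 2 := by
    have h3 : (1 + 1 / c) * a ^ 2 + (1 + c) * B ^ 2 - (a + B) ^ 2 = (a - c * B) ^ 2 / c := by
      field_simp
      ring
    have : 0 ≤ (a - c * B) ^ 2 / c := by positivity
    linarith
  have h4 : (1 + c) * B ^ 2 ≤ (1 + c) * (1 / c * T) := mul_le_mul_of_nonneg_left hBT h1c.le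
  have h5 : (1 + c) * (1 / c * T) = (1 + 1 / c) * T := by
    field_simp
    ring
  linarith
end

section
/- Let d ≥ 1, c > 0, K ∈ ℕ, let C_1, …, C_K be positive integers, and let x ≠ y ∈ ℝ^d. Let S_1, …, S_K be pairwise disjoint finite subsets of the open interval (0,1) with card S_k ≤ C_k, and set S = ⋃_{k=1}^K S_k. Let v : ℝ^d → ℝ and write g(s) = v(x + s(y−x)) for s ∈ [0,1]. Assume: (i) for every s ∈ (0,1)∖S, v is differentiable at x + s(y−x) with gradient ∇v(x+s(y−x)), and s ↦ ‖∇v(x+s(y−x))‖^2 is integrable on (0,1); (ii) g is continuous at 0 and at 1, and at each ξ ∈ S the one-sided limits g(ξ−) = lim_{s↑ξ} g(s) and g(ξ+) = lim_{s↓ξ} g(s) exist; (iii) for any two consecutive points α < β of S ∪ {0,1} (i.e. (α,β) ∩ S = ∅), one has g(β−) − g(α+) = ∫_α^β ∇v(x+s(y−x))·(y−x) ds, where g(0+), g(1−) are replaced by g(0), g(1). Then |v(y) − v(x)|^2 ≤ (1 + 1/c)·‖x−y‖^2·∫_0^1 ‖∇v(x+s(y−x))‖^2 ds + (1 + 1/c)·Σ_{k=1}^K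 (1+c)^k·C_k·Σ_{ξ∈S_k} (g(ξ+) − g(ξ−))^2. -/
open Set MeasureTheory
open scoped RealInnerProductSpace

theorem young_aux (c : ℝ) (hc : 0 < c) (a b : ℝ) :
    (a + b) ^ 2 ≤ (1 + 1 / c) * a ^ 2 + (1 + c) * b ^ 2 := by
  have h : (1 + 1 / c) * a ^ 2 + (1 + c) * b ^ 2 - (a + b) ^ 2 = (a - c * b) ^ 2 / c := by
    field_simp
    ring
  have h2 : 0 ≤ (a - c * b) ^ 2 / c := by positivity
  linarith

theorem young_sum (c : ℝ) (hc : 0 < c) (a : ℝ) (J : ℕ → ℝ) (K : ℕ) : ∀ r : ℝ,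
    (a + ∑ k ∈ Finset.Icc 1 K, J k + r) ^ 2 ≤
      (1 + 1 / c) * a ^ 2 + (1 + 1 / c) * ∑ k ∈ Finset.Icc 1 K, (1 + c) ^ k * J k ^ 2
        + (1 + c) ^ (K + 1) * r ^ 2 := by
  induction K with
  | zero => intro r; simpa using young_aux c hc a r
  | succ n ih =>
    intro r
    rw [Finset.sum_Icc_succ_top (by omega), Finset.sum_Icc_succ_top (by omega)]
    have h1 := ih (J (n + 1) + r)
    have h2 := mul_le_mul_of_nonneg_left (young_aux c hc (J (n + 1)) r)
      (by positivity : (0:ℝ) ≤ (1 + c) ^ (n + 1))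
    have e : a + (∑ k ∈ Finset.Icc 1 n, J k + J (n + 1)) + r
      = a + ∑ k ∈ Finset.Icc 1 n, J k + (J (n + 1) + r) := by ring
    rw [e, pow_succ (1 + c) (n + 1)]
    linarith

theorem telescope_aux (T : Finset ℝ) (hT : ∀ t ∈ T, 0 < t ∧ t < 1) (φ g gm gp : ℝ → ℝ)
    (hφ : IntervalIntegrable φ volume 0 1)
    (hftc : ∀ α β : ℝ,
      α ∈ insert (0:ℝ) (insert 1 (T : Set ℝ)) →
      β ∈ insert (0:ℝ) (insert 1 (T : Set ℝ)) →
      α < β → Set.Ioo α β ∩ (T : Set ℝ) = ∅ →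
      (if β = 1 then g 1 else gm β) - (if α = 0 then g 0 else gp α) = ∫ s in α..β, φ s)
    (n : ℕ) : ∀ b : ℝ, (b = 1 ∨ b ∈ T) → (T.filter (· < b)).card = n →
      (if b = 1 then g 1 else gm b) - g 0 =
        (∫ s in (0:ℝ)..b, φ s) + ∑ ξ ∈ T.filter (· < b), (gp ξ - gm ξ) := by
  induction n with
  | zero =>
    intro b hb hn
    have hb0 : 0 < b := by
      rcases hb with rfl | hb
      · norm_num
      · exact (hT b hb).1
    rw [Finset.card_eq_zero] at hn
    have h := hftc 0 b (by simp) (by rcases hb with h | h <;> simp [h]) hb0 (by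
      ext t
      simp only [Set.mem_inter_iff, Set.mem_Ioo, Set.mem_empty_iff_false, iff_false]
      rintro ⟨⟨_, h2⟩, h3⟩
      have : t ∈ T.filter (· < b) := by simpa using ⟨h3, h2⟩
      simp [hn] at this)
    rw [hn, ← h]
    simp
  | succ n ih =>
    intro b hb hn
    have hb1 : b ≤ 1 := by
      rcases hb with rfl | hb
      · norm_num
      · exact (hT b hb).2.le
    have hne : (T.filter (· < b)).Nonempty := by
      rw [← Finset.card_pos]; omega
    obtain ⟨a, ha, hmax⟩ := Finset.exists_max_image _ id hne
    simp only [Finset.mem_filter, id] at ha hmax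
    obtain ⟨haT, hab⟩ := ha
    have ha0 := (hT a haT).1
    have ha1 := (hT a haT).2
    have hins : T.filter (· < b) = insert a (T.filter (· < a)) := by
      ext t
      simp only [Finset.mem_filter, Finset.mem_insert]
      constructor
      · intro h
        rcases (hmax t h).lt_or_eq with h' | h'
        · exact Or.inr ⟨h.1, h'⟩
        · exact Or.inl h'
      · rintro (rfl | h)
        · exact ⟨haT, hab⟩
        · exact ⟨h.1, h.2.trans hab⟩
    have hnot : a ∉ T.filter (· < a) := by simp
    have hcard : (T.filter (· < a)).card = n := by
      rw [hins, Finset.card_insert_of_notMem hnot] at hn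
      omega
    have h1 := ih a (Or.inr haT) hcard
    have h2 := hftc a b (by simp [haT]) (by rcases hb with h | h <;> simp [h]) hab (by
      ext t
      simp only [Set.mem_inter_iff, Set.mem_Ioo, Set.mem_empty_iff_false, iff_false]
      rintro ⟨⟨h1, h2⟩, h3⟩
      exact absurd (hmax t ⟨by simpa using h3, h2⟩) (not_le.2 h1))
    rw [if_neg ha1.ne] at h1
    rw [if_neg ha0.ne'] at h2
    have i1 : IntervalIntegrable φ volume 0 a := hφ.mono_set (by
      rw [uIcc_of_le ha0.le, uIcc_of_le zero_le_one]; exact Icc_subset_Icc le_rfl ha1.le)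
    have i2 : IntervalIntegrable φ volume a b := hφ.mono_set (by
      rw [uIcc_of_le hab.le, uIcc_of_le zero_le_one]; exact Icc_subset_Icc ha0.le hb1)
    rw [hins, Finset.sum_insert hnot, ← intervalIntegral.integral_add_adjacent_intervals i1 i2]
    linarith

theorem fundamental_estimate_segment
    (d : ℕ) (hd : 1 ≤ d) (c : ℝ) (hc : 0 < c) (K : ℕ) (C : ℕ → ℕ)
    (hC : ∀ k ∈ Finset.Icc 1 K, 0 < C k)
    (x y : EuclideanSpace ℝ (Fin d)) (hxy : x ≠ y)
    (S : ℕ → Finset ℝ)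
    (hSsub : ∀ k ∈ Finset.Icc 1 K, (S k : Set ℝ) ⊆ Set.Ioo 0 1)
    (hScard : ∀ k ∈ Finset.Icc 1 K, (S k).card ≤ C k)
    (hSdisj : ∀ k ∈ Finset.Icc 1 K, ∀ l ∈ Finset.Icc 1 K, k ≠ l → Disjoint (S k) (S l))
    (v : EuclideanSpace ℝ (Fin d) → ℝ)
    (G : EuclideanSpace ℝ (Fin d) → EuclideanSpace ℝ (Fin d))
    (g : ℝ → ℝ) (hg : ∀ s, g s = v (x + s • (y - x)))
    (gm gp : ℝ → ℝ)
    -- (i) differentiability off the crossing points, with square-integrable gradient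
    (hdiff : ∀ s ∈ Set.Ioo (0:ℝ) 1 \ (((Finset.Icc 1 K).biUnion S : Finset ℝ) : Set ℝ),
      HasGradientAt v (G (x + s • (y - x))) (x + s • (y - x)))
    (hint : MeasureTheory.IntegrableOn (fun s : ℝ => ‖G (x + s • (y - x))‖ ^ 2) (Set.Ioo (0:ℝ) 1))
    -- (ii) continuity at the endpoints and one-sided limits at the crossing points
    (hg0 : ContinuousWithinAt g (Set.Icc 0 1) 0)
    (hg1 : ContinuousWithinAt g (Set.Icc 0 1) 1)
    (hgm : ∀ ξ ∈ (Finset.Icc 1 K).biUnion S,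
      Filter.Tendsto g (nhdsWithin ξ (Set.Iio ξ)) (nhds (gm ξ)))
    (hgp : ∀ ξ ∈ (Finset.Icc 1 K).biUnion S,
      Filter.Tendsto g (nhdsWithin ξ (Set.Ioi ξ)) (nhds (gp ξ)))
    -- (iii) fundamental theorem of calculus between consecutive crossing points
    (hftc : ∀ α β : ℝ,
      α ∈ insert (0:ℝ) (insert 1 (((Finset.Icc 1 K).biUnion S : Finset ℝ) : Set ℝ)) →
      β ∈ insert (0:ℝ) (insert 1 (((Finset.Icc 1 K).biUnion S : Finset ℝ) : Set ℝ)) →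
      α < β →
      Set.Ioo α β ∩ (((Finset.Icc 1 K).biUnion S : Finset ℝ) : Set ℝ) = ∅ →
      (if β = 1 then g 1 else gm β) - (if α = 0 then g 0 else gp α)
        = ∫ s in α..β, ⟪G (x + s • (y - x)), y - x⟫) :
    |v y - v x| ^ 2 ≤
      (1 + 1 / c) * ‖x - y‖ ^ 2 * (∫ s in (0:ℝ)..1, ‖G (x + s • (y - x))‖ ^ 2)
        + (1 + 1 / c) * ∑ k ∈ Finset.Icc 1 K, (1 + c) ^ k * (C k : ℝ) *
            ∑ ξ ∈ S k, (gp ξ - gm ξ) ^ 2 := by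
  set T := (Finset.Icc 1 K).biUnion S with hTdef
  have hT : ∀ t ∈ T, 0 < t ∧ t < 1 := by
    intro t ht
    obtain ⟨k, hk, htk⟩ := Finset.mem_biUnion.1 ht
    exact hSsub k hk htk
  set φ : ℝ → ℝ := fun s => ⟪G (x + s • (y - x)), y - x⟫ with hφdef
  have hder : ∀ s ∈ Set.Ioo (0:ℝ) 1 \ (T : Set ℝ), deriv g s = φ s := by
    intro s hs
    have h1 := (hdiff s hs).hasFDerivAt
    have h2 : HasDerivAt (fun s : ℝ => x + s • (y - x)) (y - x) s := by
      simpa using ((hasDerivAt_id s).smul_const (y - x)).const_add x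
    have h3 := h1.comp_hasDerivAt s h2
    have hgf : g = v ∘ (fun s : ℝ => x + s • (y - x)) := funext hg
    rw [hgf, h3.deriv]
    simp [hφdef]
  have hint1 : IntervalIntegrable (fun s : ℝ => ‖G (x + s • (y - x))‖ ^ 2) volume 0 1 := by
    rw [intervalIntegrable_iff_integrableOn_Ioo_of_le zero_le_one]
    exact hint
  have hφ : IntervalIntegrable φ volume 0 1 := by
    rw [intervalIntegrable_iff_integrableOn_Ioo_of_le zero_le_one]
    have hae : deriv g =ᵐ[volume.restrict (Set.Ioo (0:ℝ) 1)] φ := by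
      have hTn : ∀ᵐ s ∂(volume.restrict (Set.Ioo (0:ℝ) 1)), s ∉ (T : Set ℝ) :=
        ae_restrict_of_ae (measure_eq_zero_iff_ae_notMem.1 (T.finite_toSet.measure_zero volume))
      filter_upwards [hTn, ae_restrict_mem measurableSet_Ioo] with s h1 h2
      exact hder s ⟨h2, h1⟩
    have hm : AEStronglyMeasurable φ (volume.restrict (Set.Ioo (0:ℝ) 1)) :=
      ((aestronglyMeasurable_deriv g _)).congr hae
    have hb : IntegrableOn (fun s : ℝ => ‖y - x‖ * (1 + ‖G (x + s • (y - x))‖ ^ 2))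
        (Set.Ioo (0:ℝ) 1) :=
      ((integrableOn_const (by simp)).add hint).const_mul _
    refine Integrable.mono' hb hm (Filter.Eventually.of_forall fun s => ?_)
    have h1 : ‖φ s‖ ≤ ‖G (x + s • (y - x))‖ * ‖y - x‖ := norm_inner_le_norm _ _
    have h2 : ‖G (x + s • (y - x))‖ ≤ 1 + ‖G (x + s • (y - x))‖ ^ 2 := by
      nlinarith [sq_nonneg (‖G (x + s • (y - x))‖ - 1), sq_nonneg (‖G (x + s • (y - x))‖)]
    nlinarith [norm_nonneg (y - x)]
  have htel := telescope_aux T hT φ g gm gp hφ hftc _ 1 (Or.inl rfl) rfl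
  have hfil : T.filter (· < 1) = T := Finset.filter_true_of_mem fun t ht => (hT t ht).2
  rw [if_pos rfl, hfil, hTdef, Finset.sum_biUnion (fun k hk l hl hkl => hSdisj k hk l hl hkl)] at htel
  set I := ∫ s in (0:ℝ)..1, φ s with hI
  have hCS : I ^ 2 ≤ ‖x - y‖ ^ 2 * ∫ s in (0:ℝ)..1, ‖G (x + s • (y - x))‖ ^ 2 := by
    have hmono : (∫ s in (0:ℝ)..1, (2 * I * φ s - I ^ 2)) ≤
        ∫ s in (0:ℝ)..1, ‖x - y‖ ^ 2 * ‖G (x + s • (y - x))‖ ^ 2 := by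
      refine intervalIntegral.integral_mono_on zero_le_one
        ((hφ.const_mul _).sub intervalIntegrable_const) (hint1.const_mul _) fun s _ => ?_
      have h1 : |φ s| ≤ ‖G (x + s • (y - x))‖ * ‖y - x‖ := abs_real_inner_le_norm _ _
      have h2 := pow_le_pow_left₀ (abs_nonneg _) h1 2
      rw [sq_abs, mul_pow] at h2
      rw [norm_sub_rev x y]
      nlinarith [sq_nonneg (φ s - I)]
    rw [intervalIntegral.integral_sub (hφ.const_mul _) intervalIntegrable_const,
      intervalIntegral.integral_const_mul, intervalIntegral.integral_const_mul, ← hI] at hmono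
    simp at hmono
    nlinarith
  have hv : v y - v x = I + ∑ k ∈ Finset.Icc 1 K, ∑ ξ ∈ S k, (gp ξ - gm ξ) + 0 := by
    rw [add_zero, ← htel, hg, hg]
    simp
  have hY := young_sum c hc I (fun k => ∑ ξ ∈ S k, (gp ξ - gm ξ)) K 0
  have hc' : (0:ℝ) ≤ 1 + 1 / c := by positivity
  have hJ : ∑ k ∈ Finset.Icc 1 K, (1 + c) ^ k * (∑ ξ ∈ S k, (gp ξ - gm ξ)) ^ 2 ≤
      ∑ k ∈ Finset.Icc 1 K, (1 + c) ^ k * (C k : ℝ) * ∑ ξ ∈ S k, (gp ξ - gm ξ) ^ 2 := by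
    refine Finset.sum_le_sum fun k hk => ?_
    rw [mul_assoc]
    refine mul_le_mul_of_nonneg_left ?_ (by positivity)
    refine sq_sum_le_card_mul_sum_sq.trans ?_
    exact mul_le_mul_of_nonneg_right (by exact_mod_cast hScard k hk)
      (Finset.sum_nonneg fun _ _ => sq_nonneg _)
  have e1 := mul_le_mul_of_nonneg_left hCS hc'
  have e2 := mul_le_mul_of_nonneg_left hJ hc'
  rw [sq_abs, hv]
  refine hY.trans ?_
  rw [mul_assoc (1 + 1 / c) (‖x - y‖ ^ 2)]
  have e3 : (1 + c) ^ (K + 1) * (0:ℝ) ^ 2 = 0 := by simp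
  rw [e3]
  linarith
end

section
/- Let d ≥ 1, let ν ∈ ℝ^d be a unit vector, α ∈ ℝ, and let Γ be a Borel subset of the affine hyperplane H = {z ∈ ℝ^d : z·ν = α}. Let f : ℝ^d → [0,∞] be Borel measurable, let e ∈ ℝ^d be a unit vector, and let η > 0. Then ∫_{ℝ^d} ( Σ_{ξ ∈ Γ ∩ (x, x+ηe)} f(ξ) ) dx ≤ η ∫_Γ f dμ_H^{d−1}, where (x, x+ηe) = {x + tηe : t ∈ (0,1)} denotes the open segment from x to x+ηe, the inner sum is the (possibly infinite) sum of f over all intersection points, the outer integral is the Lebesgue lower integral, and μ_H^{d−1} denotes the (d−1)-dimensional Hausdorff measure on ℝ^d. -/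
open Set MeasureTheory
open scoped RealInnerProductSpace ENNReal

theorem jte_aux (n : ℕ) (ν : EuclideanSpace ℝ (Fin (n+1))) (hν : ‖ν‖ = 1) :
    ∃ Ψ : (ℝ × (Fin n → ℝ)) ≃ᵐ EuclideanSpace ℝ (Fin (n+1)),
      MeasurePreserving Ψ ∧ (∀ p, ⟪Ψ p, ν⟫ = p.1) ∧ (∀ p q, Ψ (p + q) = Ψ p + Ψ q) ∧
      (∀ (a : ℝ) p, Ψ (a • p) = a • Ψ p) ∧
      LipschitzWith 1 (fun x => (Ψ.symm x).2) := by
  obtain ⟨b, hb⟩ := Orthonormal.exists_orthonormalBasis_extension_of_card_eq (𝕜 := ℝ)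
    (E := EuclideanSpace ℝ (Fin (n+1))) (ι := Fin (n+1)) (by simp)
    (v := fun _ => ν) (s := {0}) (by
      rw [orthonormal_iff_ite]
      rintro ⟨i, hi⟩ ⟨j, hj⟩
      simp only [mem_singleton_iff] at hi hj
      subst hi; subst hj
      simp [hν])
  have hb0 : b 0 = ν := hb 0 rfl
  let e1 := b.measurableEquiv
  let e2 := (MeasurableEquiv.toLp 2 (Fin (n+1) → ℝ)).symm
  let e3 := MeasurableEquiv.piFinSuccAbove (fun _ : Fin (n+1) => ℝ) 0
  let Φ := (e1.trans e2).trans e3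
  have hΦ : MeasurePreserving Φ :=
    (volume_preserving_piFinSuccAbove (fun _ : Fin (n+1) => ℝ) 0).comp
      ((PiLp.volume_preserving_ofLp (Fin (n+1))).comp b.measurePreserving_measurableEquiv)
  have h1 : ∀ x, (Φ x).1 = ⟪x, ν⟫ := by
    intro x
    show b.repr x 0 = _
    rw [b.repr_apply_apply, hb0, real_inner_comm]
  have h2 : ∀ x i, (Φ x).2 i = b.repr x i.succ := by
    intro x i
    rfl
  have hadd : ∀ x y, Φ (x + y) = Φ x + Φ y := by
    intro x y
    ext i
    · simp [h1, inner_add_left]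
    · simp [h2]
  have hsmul : ∀ (a : ℝ) x, Φ (a • x) = a • Φ x := by
    intro a x
    ext i
    · simp [h1, inner_smul_left]
    · simp [h2]
  refine ⟨Φ.symm, hΦ.symm, ?_, ?_, ?_, ?_⟩
  · intro p
    rw [← h1]; simp
  · intro p q
    apply Φ.injective
    rw [hadd]; simp
  · intro a p
    apply Φ.injective
    rw [hsmul]; simp
  · refine LipschitzWith.of_dist_le_mul ?_
    intro x y
    simp only [MeasurableEquiv.symm_symm, NNReal.coe_one, one_mul]
    rw [dist_pi_le_iff dist_nonneg]
    intro i
    rw [h2, h2, ← b.repr.dist_map x y, Real.dist_eq, dist_eq_norm]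
    have := PiLp.norm_apply_le (b.repr x - b.repr y) i.succ
    simpa using this

theorem jump_trace_estimate_hyperplane
    (d : ℕ) (hd : 1 ≤ d)
    (ν : EuclideanSpace ℝ (Fin d)) (hν : ‖ν‖ = 1) (α : ℝ)
    (Γ : Set (EuclideanSpace ℝ (Fin d)))
    (hΓH : Γ ⊆ {z : EuclideanSpace ℝ (Fin d) | ⟪z, ν⟫ = α})
    (hΓm : MeasurableSet Γ)
    (f : EuclideanSpace ℝ (Fin d) → ℝ≥0∞) (hf : Measurable f)
    (e : EuclideanSpace ℝ (Fin d)) (he : ‖e‖ = 1) (η : ℝ) (hη : 0 < η) :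
    ∫⁻ x, ∑' ξ : (Γ ∩ openSegment ℝ x (x + η • e) : Set (EuclideanSpace ℝ (Fin d))), f ξ
      ≤ ENNReal.ofReal η * ∫⁻ ξ in Γ, f ξ ∂(μH[(d : ℝ) - 1]) := by
  obtain ⟨n, rfl⟩ : ∃ n, d = n + 1 := ⟨d - 1, by omega⟩
  have hn : (((n + 1 : ℕ) : ℝ) - 1) = n := by push_cast; ring
  rw [hn]
  obtain ⟨Ψ, hΨ, hin, hadd, hsmul, hlip⟩ := jte_aux n ν hν
  have hseg : ∀ x ξ, ξ ∈ Γ ∩ openSegment ℝ x (x + η • e) →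
      ∃ t : ℝ, 0 < t ∧ t < η ∧ ξ = x + t • e ∧ t * ⟪e, ν⟫ = α - ⟪x, ν⟫ := by
    rintro x ξ ⟨h1, h2⟩
    rw [openSegment_eq_image'] at h2
    obtain ⟨θ, ⟨h0, h1'⟩, rfl⟩ := h2
    have hx := hΓH h1
    refine ⟨θ * η, by positivity, by nlinarith, by simp [smul_smul], ?_⟩
    simp only [add_sub_cancel_left, smul_smul, mem_ofPred_eq, inner_add_left, inner_smul_left,
      conj_trivial] at hx
    linarith
  by_cases hc : ⟪e, ν⟫ = 0
  · have h0 : ∀ᵐ x : EuclideanSpace ℝ (Fin (n+1)), ⟪x, ν⟫ ≠ α := by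
      have : MeasurableSet {x : EuclideanSpace ℝ (Fin (n+1)) | ⟪x, ν⟫ = α} :=
        (isClosed_eq (by fun_prop) continuous_const).measurableSet
      rw [ae_iff]
      simp only [ne_eq, not_not]
      rw [← hΨ.measure_preimage this.nullMeasurableSet]
      have : Ψ ⁻¹' {x | ⟪x, ν⟫ = α} = {α} ×ˢ univ := by
        ext p; simp [hin]
      rw [this, Measure.volume_eq_prod, Measure.prod_prod]
      simp
    rw [lintegral_congr_ae (g := fun _ => 0)]
    · simp
    filter_upwards [h0] with x hx
    rw [ENNReal.tsum_eq_zero]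
    rintro ⟨ξ, hξ⟩
    obtain ⟨t, -, -, -, ht⟩ := hseg x ξ hξ
    rw [hc] at ht
    exact absurd (by linarith) hx
  set c := ⟪e, ν⟫ with hcdef
  have hc1 : |c| ≤ 1 := by
    have := abs_real_inner_le_norm e ν
    rw [he, hν] at this
    simpa using this
  set g := Γ.indicator f with hg
  have hgm : Measurable g := hf.indicator hΓm
  set T : ℝ → ℝ := fun s => (α - s) / c with hT
  set S : Set ℝ := T ⁻¹' Ioo 0 η with hS
  have hTm : Measurable T := by fun_prop
  have hSm : MeasurableSet S := hTm measurableSet_Ioo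
  set G : EuclideanSpace ℝ (Fin (n+1)) → ℝ≥0∞ := fun x =>
    S.indicator 1 ⟪x, ν⟫ * g (x + T ⟪x, ν⟫ • e) with hG
  have him : Measurable fun x : EuclideanSpace ℝ (Fin (n+1)) => ⟪x, ν⟫ := by fun_prop
  have hGm : Measurable G := by
    refine Measurable.mul ((measurable_one.indicator hSm).comp him) (hgm.comp ?_)
    exact measurable_id.add ((hTm.comp him).smul_const e)
  have hFG : ∀ x, ∑' ξ : (Γ ∩ openSegment ℝ x (x + η • e) :
      Set (EuclideanSpace ℝ (Fin (n+1)))), f ξ ≤ G x := by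
    intro x
    have key : ∀ ξ ∈ Γ ∩ openSegment ℝ x (x + η • e),
        ξ = x + T ⟪x, ν⟫ • e ∧ ⟪x, ν⟫ ∈ S := by
      intro ξ hξ
      obtain ⟨t, h0, h1, h2, h3⟩ := hseg x ξ hξ
      have : T ⟪x, ν⟫ = t := by
        rw [hT]; simp only; rw [← h3]; field_simp
      refine ⟨by rw [this, h2], ?_⟩
      rw [hS, mem_preimage, this]; exact ⟨h0, h1⟩
    rcases (Γ ∩ openSegment ℝ x (x + η • e)).eq_empty_or_nonempty with h | ⟨ξ, hξ⟩
    · rw [h]; simp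
    · have hs : Γ ∩ openSegment ℝ x (x + η • e) = {ξ} := by
        refine Set.eq_singleton_iff_unique_mem.2 ⟨hξ, fun y hy => ?_⟩
        rw [(key y hy).1, (key ξ hξ).1]
      rw [hs, tsum_singleton ξ f, hG]
      simp only
      rw [← (key ξ hξ).1, indicator_of_mem (key ξ hξ).2, hg, indicator_of_mem hξ.1]
      simp
  have hvol : volume S ≤ ENNReal.ofReal η := by
    have hsub : ∃ a, S ⊆ Ioo a (a + |c| * η) := by
      rcases lt_or_gt_of_ne hc with h | h
      · refine ⟨α, fun s hs => ?_⟩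
        obtain ⟨h0, h1⟩ := hs
        simp only [hT] at h0 h1
        have e1 : (α - s) / c * c = α - s := by field_simp
        rw [abs_of_neg h]
        constructor <;> nlinarith
      · refine ⟨α - c * η, fun s hs => ?_⟩
        obtain ⟨h0, h1⟩ := hs
        simp only [hT] at h0 h1
        have e1 : (α - s) / c * c = α - s := by field_simp
        rw [abs_of_pos h]
        constructor <;> nlinarith
    obtain ⟨a, ha⟩ := hsub
    refine (measure_mono ha).trans ?_
    rw [Real.volume_Ioo]
    apply ENNReal.ofReal_le_ofReal
    nlinarith
  set ι : (Fin n → ℝ) → EuclideanSpace ℝ (Fin (n+1)) := fun y => Ψ (α, y) with hι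
  have hιm : Measurable ι := Ψ.measurable.comp (by fun_prop)
  have hmeas : Measure.map ι volume ≤ (μH[(n : ℝ)] : Measure (EuclideanSpace ℝ (Fin (n+1)))) := by
    refine Measure.le_iff.2 fun A hA => ?_
    rw [Measure.map_apply hιm hA]
    have h1 : ι ⁻¹' A ⊆ (fun x => (Ψ.symm x).2) '' A := by
      intro y hy
      exact ⟨ι y, hy, by simp [hι]⟩
    have h2 := hlip.hausdorffMeasure_image_le (d := n) (by positivity) A
    have h3 : (volume : Measure (Fin n → ℝ)) = μH[(n : ℝ)] := by
      rw [← hausdorffMeasure_pi_real]; simp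
    rw [h3]
    exact (measure_mono h1).trans (by simpa using h2)
  set w := (Ψ.symm e).2 with hw
  have hew : Ψ (c, w) = e := by
    have : Ψ.symm e = (c, w) := by
      ext1
      · rw [← hin, Ψ.apply_symm_apply]
      · rfl
    rw [← this, Ψ.apply_symm_apply]
  calc _ ≤ ∫⁻ x, G x := lintegral_mono hFG
    _ = ∫⁻ p, G (Ψ p) := (hΨ.lintegral_comp hGm).symm
    _ = ∫⁻ s, ∫⁻ y, G (Ψ (s, y)) := by
      rw [Measure.volume_eq_prod]
      exact lintegral_prod (fun p => G (Ψ p)) (hGm.comp Ψ.measurable).aemeasurable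
    _ = ∫⁻ s, S.indicator 1 s * ∫⁻ y, g (ι y) := by
      refine lintegral_congr fun s => ?_
      have : ∀ y, G (Ψ (s, y)) = S.indicator 1 s * g (ι (y + T s • w)) := by
        intro y
        simp only [hG, hin, hι]
        congr 2
        rw [← hew, ← hsmul, ← hadd]
        congr 1
        ext1
        · simp [hT]; field_simp; ring
        · simp
      simp_rw [this]
      have hm : Measurable fun y => g (ι (y + T s • w)) :=
        (hgm.comp hιm).comp (measurable_id.add_const _)
      rw [lintegral_const_mul _ hm]
      rw [lintegral_add_right_eq_self (fun y => g (ι y))]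
    _ = volume S * ∫⁻ y, g (ι y) := by
      rw [lintegral_mul_const _ (measurable_one.indicator hSm), lintegral_indicator_one hSm]
    _ ≤ ENNReal.ofReal η * ∫⁻ ξ, g ξ ∂(μH[(n : ℝ)]) := by
      gcongr
      rw [← lintegral_map hgm hιm]
      exact lintegral_mono' hmeas le_rfl
    _ = _ := by rw [hg, lintegral_indicator hΓm]
end

section
/- Let d ≥ 1, let Q ⊂ ℝ^d be a bounded measurable set with R = diam Q > 0, let c > 0 and A, B ∈ [0,∞), and let v : ℝ^d → ℝ be measurable. Assume that for every unit vector e ∈ ℝ^d and every η ∈ (0, R]: ∫_Q |v(x) − v(x+ηe)|^2 dx ≤ η·(1 + 1/c)·(η·A + B). Then for every s ∈ [0, 1/2): ∫_Q ∫_Q |v(x) − v(y)|^2 / ‖x−y‖^{d+2s} dx dy ≤ (1 + 1/c)·max(R,1)·σ_{d−1}·(R^{1−2s}/(1−2s))·(A + B), where the double integral is taken over pairs x ≠ y and σ_{d−1} denotes the surface measure of the unit sphere 𝕊^{d−1} ⊂ ℝ^d. -/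
open Set MeasureTheory
open scoped ENNReal Pointwise

lemma cone_vol (n : ℕ) (a : Fin n → ℝ) (L : ℝ) (hL : 0 ≤ L) :
    volume {x : Fin (n+1) → ℝ | x 0 ∈ Ioo (0:ℝ) 1 ∧
      ∀ i : Fin n, x i.succ ∈ Icc (x 0 * a i) (x 0 * (a i + L))} ≤
      ENNReal.ofReal (L ^ n / (n + 1)) := by
  set S : Set (ℝ × (Fin n → ℝ)) := {p | p.1 ∈ Ioo (0:ℝ) 1 ∧
      ∀ i : Fin n, p.2 i ∈ Icc (p.1 * a i) (p.1 * (a i + L))} with hS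
  have hSm : MeasurableSet S := by
    refine (measurable_fst measurableSet_Ioo).inter ?_
    have : {p : ℝ × (Fin n → ℝ) | ∀ i : Fin n, p.2 i ∈ Icc (p.1 * a i) (p.1 * (a i + L))} =
      ⋂ i, {p : ℝ × (Fin n → ℝ) | p.1 * a i ≤ p.2 i} ∩ {p | p.2 i ≤ p.1 * (a i + L)} := by
      ext p; simp [Set.mem_iInter]
    change MeasurableSet {p : ℝ × (Fin n → ℝ) | ∀ i : Fin n, p.2 i ∈ Icc (p.1 * a i) (p.1 * (a i + L))}
    rw [this]
    refine MeasurableSet.iInter fun i => MeasurableSet.inter ?_ ?_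
    · exact measurableSet_le (by fun_prop) (by fun_prop)
    · exact measurableSet_le (by fun_prop) (by fun_prop)
  have hmp := volume_preserving_piFinSuccAbove (fun _ : Fin (n+1) => ℝ) 0
  have heq : {x : Fin (n+1) → ℝ | x 0 ∈ Ioo (0:ℝ) 1 ∧
      ∀ i : Fin n, x i.succ ∈ Icc (x 0 * a i) (x 0 * (a i + L))} =
      (MeasurableEquiv.piFinSuccAbove (fun _ : Fin (n+1) => ℝ) 0) ⁻¹' S := by
    ext x
    simp [hS, MeasurableEquiv.piFinSuccAbove, Fin.tail]
  rw [heq, hmp.measure_preimage hSm.nullMeasurableSet, Measure.volume_eq_prod,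
    Measure.prod_apply hSm]
  have hsl : ∀ t : ℝ, volume (Prod.mk t ⁻¹' S) ≤
      (Ioo (0:ℝ) 1).indicator (fun t => ENNReal.ofReal (t ^ n * L ^ n)) t := by
    intro t
    by_cases ht : t ∈ Ioo (0:ℝ) 1
    · rw [indicator_of_mem ht]
      have : Prod.mk t ⁻¹' S = Icc (fun i => t * a i) (fun i => t * (a i + L)) := by
        ext y
        simp only [hS, mem_preimage, mem_ofPred_eq, ht, true_and]
        simp [Set.mem_Icc, Pi.le_def, forall_and]
      rw [this, Real.volume_Icc_pi]
      simp only [mul_add, add_sub_cancel_left, Finset.prod_const, Finset.card_univ,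
        Fintype.card_fin]
      rw [← ENNReal.ofReal_pow (mul_nonneg ht.1.le hL), mul_pow]
    · rw [indicator_of_notMem ht]
      have : Prod.mk t ⁻¹' S = ∅ := by
        ext y
        simp only [hS, mem_preimage, mem_ofPred_eq, ht, false_and, mem_empty_iff_false]
      simp [this]
  refine (lintegral_mono hsl).trans ?_
  rw [lintegral_indicator measurableSet_Ioo, ← ofReal_integral_eq_lintegral_ofReal]
  · rw [integral_mul_const, ← integral_Ioc_eq_integral_Ioo,
      ← intervalIntegral.integral_of_le zero_le_one, integral_pow]
    apply le_of_eq; congr 1; simp; ring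
  · exact (Continuous.integrableOn_Icc (by fun_prop)).mono_set Ioo_subset_Icc_self
  · filter_upwards [ae_restrict_mem measurableSet_Ioo] with t ht
    have := ht.1
    positivity

lemma gnom_bound (u w u0 w0 δ : ℝ) (hδ : δ < 1) (hδ0 : 0 ≤ δ) (h1 : |u - w| ≤ δ)
    (h2 : |w0 - u0| ≤ δ) (h3 : |w| ≤ δ) (hu : 1 - δ ≤ u0) (hw : 1 - δ ≤ w0) :
    |u / u0 - w / w0| ≤ δ / (1 - δ) ^ 2 := by
  have hp : 0 < 1 - δ := by linarith
  have hu' : 0 < u0 := by linarith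
  have hw' : 0 < w0 := by linarith
  have : u / u0 - w / w0 = (u - w) / u0 + w * (w0 - u0) / (u0 * w0) := by field_simp; ring
  rw [this]
  refine (abs_add_le _ _).trans ?_
  rw [abs_div, abs_div, abs_mul, abs_of_pos hu', abs_of_pos (mul_pos hu' hw')]
  calc |u - w| / u0 + |w| * |w0 - u0| / (u0 * w0) ≤ δ / (1-δ) + δ * δ / ((1-δ)*(1-δ)) := by
        gcongr
    _ = δ / (1 - δ) ^ 2 := by field_simp; ring

lemma cone_sphere (n : ℕ) (T : Set (EuclideanSpace ℝ (Fin (n+1)))) (δ : ℝ) (hδ0 : 0 ≤ δ)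
    (hδ : δ < 1) (hT : T ⊆ Metric.sphere 0 1) (hd : ∀ x ∈ T, ∀ y ∈ T, dist x y ≤ δ) :
    volume (Ioo (0:ℝ) 1 • T) ≤ ENNReal.ofReal ((δ / (1 - δ) ^ 2) ^ n / (n + 1)) := by
  rcases T.eq_empty_or_nonempty with rfl | ⟨e, he⟩
  · simp
  have hnorm : ∀ x ∈ T, ‖x‖ = 1 := fun x hx => by simpa using hT hx
  obtain ⟨b, hb⟩ : ∃ b : OrthonormalBasis (Fin (n+1)) ℝ (EuclideanSpace ℝ (Fin (n+1))), b 0 = e := by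
    have := Orthonormal.exists_orthonormalBasis_extension_of_card_eq (𝕜 := ℝ)
      (E := EuclideanSpace ℝ (Fin (n+1))) (ι := Fin (n+1)) (by simp) (v := fun _ => e) (s := {0})
      (by
        rw [orthonormal_iff_ite]
        intro i j
        have : i = j := Subsingleton.elim _ _
        simp [this, Set.domRestrict, hnorm e he])
    obtain ⟨b, hb⟩ := this
    exact ⟨b, hb 0 rfl⟩
  set f : EuclideanSpace ℝ (Fin (n+1)) → (Fin (n+1) → ℝ) := fun x => (b.repr x).ofLp with hf
  have hfmp : MeasurePreserving f := (PiLp.volume_preserving_ofLp _).comp b.measurePreserving_repr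
  have hfd : ∀ x y i, |f x i - f y i| ≤ dist x y := by
    intro x y i
    have h := PiLp.norm_apply_le (b.repr (x - y)) i
    rw [b.repr.norm_map, ← dist_eq_norm] at h
    simpa [hf] using h
  have hfe0 : f e 0 = 1 := by simp [hf, ← hb]
  have hfei : ∀ i : Fin n, f e i.succ = 0 := by
    intro i; simp [hf, ← hb]
  have hpos : ∀ x ∈ T, 1 - δ ≤ f x 0 := by
    intro x hx
    have h1 := (hfd e x 0).trans (hd e he x hx)
    rw [hfe0] at h1
    linarith [le_abs_self (1 - f x 0)]
  have hle : ∀ x ∈ T, f x 0 ≤ 1 := by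
    intro x hx
    have h := PiLp.norm_apply_le (b.repr x) 0
    rw [b.repr.norm_map, hnorm x hx] at h
    exact (le_abs_self _).trans h
  have hG : ∀ i : Fin n, ∀ x ∈ T, ∀ y ∈ T,
      |f x i.succ / f x 0 - f y i.succ / f y 0| ≤ δ / (1 - δ) ^ 2 := by
    intro i x hx y hy
    refine gnom_bound _ _ _ _ δ hδ hδ0 ((hfd x y _).trans (hd x hx y hy))
      ((hfd y x _).trans (hd y hy x hx)) ?_ (hpos x hx) (hpos y hy)
    have := (hfd y e i.succ).trans (hd y hy e he)
    simpa [hfei] using this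
  set L := δ / (1 - δ) ^ 2 with hL
  have hL0 : 0 ≤ L := by positivity
  set a : Fin n → ℝ := fun i => sInf ((fun x => f x i.succ / f x 0) '' T) with ha
  have hI : ∀ i : Fin n, ∀ x ∈ T, f x i.succ / f x 0 ∈ Icc (a i) (a i + L) := by
    intro i x hx
    constructor
    · apply csInf_le
      · refine ⟨f x i.succ / f x 0 - L, ?_⟩
        rintro _ ⟨y, hy, rfl⟩
        have := hG i x hx y hy
        have := le_abs_self (f x i.succ / f x 0 - f y i.succ / f y 0)
        show _ ≤ f y i.succ / f y 0
        linarith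
      · exact ⟨x, hx, rfl⟩
    · have : f x i.succ / f x 0 - L ≤ a i := by
        apply le_csInf
        · exact ⟨_, e, he, rfl⟩
        · rintro _ ⟨y, hy, rfl⟩
          have := hG i x hx y hy
          have := le_abs_self (f x i.succ / f x 0 - f y i.succ / f y 0)
          show _ ≤ f y i.succ / f y 0
          linarith
      linarith
  have hsub : Ioo (0:ℝ) 1 • T ⊆ f ⁻¹' {x : Fin (n+1) → ℝ | x 0 ∈ Ioo (0:ℝ) 1 ∧
      ∀ i : Fin n, x i.succ ∈ Icc (x 0 * a i) (x 0 * (a i + L))} := by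
    rintro _ ⟨ρ, hρ, x, hx, rfl⟩
    have hx0 : 0 < f x 0 := by linarith [hpos x hx]
    have hfs : ∀ i, f (ρ • x) i = ρ * f x i := by intro i; simp [hf]
    have hle' := hle x hx
    simp only [mem_preimage, mem_ofPred_eq, hfs]
    refine ⟨⟨mul_pos hρ.1 hx0, by nlinarith [hρ.1, hρ.2]⟩, fun i => ?_⟩
    have hh := hI i x hx
    have hk : f x i.succ = f x 0 * (f x i.succ / f x 0) := by field_simp
    have hq : 0 < ρ * f x 0 := mul_pos hρ.1 hx0
    rw [hk]
    constructor
    · rw [← mul_assoc]; exact mul_le_mul_of_nonneg_left hh.1 hq.le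
    · rw [← mul_assoc]; exact mul_le_mul_of_nonneg_left hh.2 hq.le
  refine (measure_mono hsub).trans ?_
  refine (hfmp.measure_preimage_emb ?_ _).trans_le (cone_vol n a L hL0)
  exact (MeasurableEquiv.toLp 2 (Fin (n+1) → ℝ)).symm.measurableEmbedding.comp
    b.measurableEquiv.measurableEmbedding

lemma sphere_le (n : ℕ) :
    (volume : Measure (EuclideanSpace ℝ (Fin (n+1)))).toSphere univ ≤
      μH[(n:ℝ)] (Metric.sphere (0 : EuclideanSpace ℝ (Fin (n+1))) 1) := by
  set σ := (volume : Measure (EuclideanSpace ℝ (Fin (n+1)))).toSphere with hσ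
  set μ : Measure (EuclideanSpace ℝ (Fin (n+1))) := σ.map Subtype.val with hμ
  have hμS : μ (Metric.sphere (0 : EuclideanSpace ℝ (Fin (n+1))) 1) = σ univ := by
    rw [hμ, Measure.map_apply measurable_subtype_coe Metric.isClosed_sphere.measurableSet]
    simp
  have key : ∀ r ∈ Ioo (0:ℝ) 1, ENNReal.ofReal (((1 - r) ^ 2) ^ n) * σ univ ≤
      μH[(n:ℝ)] (Metric.sphere (0 : EuclideanSpace ℝ (Fin (n+1))) 1) := by
    intro r hr
    have hr1 : 0 < 1 - r := by linarith [hr.2]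
    rw [← hμS, ← smul_eq_mul, ← Measure.smul_apply]
    refine Measure.le_iff'.1 (Measure.le_hausdorffMeasure (n:ℝ) _ (ENNReal.ofReal r) (by simpa using hr.1) ?_) _
    intro s hs
    rw [Measure.smul_apply, smul_eq_mul]
    set δ := (Metric.ediam s).toReal with hδ
    have hfin : Metric.ediam s ≠ ⊤ := ne_top_of_le_ne_top ENNReal.ofReal_ne_top hs
    have hδr : δ ≤ r := ENNReal.toReal_le_of_le_ofReal hr.1.le hs
    have hδ0 : 0 ≤ δ := ENNReal.toReal_nonneg
    have hes : Metric.ediam s = ENNReal.ofReal δ := (ENNReal.ofReal_toReal hfin).symm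
    have h1 : μ s ≤ ENNReal.ofReal ((δ / (1 - δ) ^ 2) ^ n) := by
      refine (measure_mono subset_closure).trans ?_
      rw [hμ, Measure.map_apply measurable_subtype_coe isClosed_closure.measurableSet, hσ,
        Measure.toSphere_apply' _ (measurable_subtype_coe isClosed_closure.measurableSet)]
      refine (mul_le_mul_right (cone_sphere n _ δ hδ0 (by linarith [hr.2]) ?_ ?_) _).trans ?_
      · rintro _ ⟨x, _, rfl⟩; exact x.2
      · rintro _ ⟨x, hx, rfl⟩ _ ⟨y, hy, rfl⟩
        have := Metric.edist_le_ediam_of_mem (s := closure s) hx hy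
        rw [Metric.ediam_closure, hes, edist_dist] at this
        exact (ENNReal.ofReal_le_ofReal_iff hδ0).1 this
      · rw [finrank_euclideanSpace, Fintype.card_fin, ← ENNReal.ofReal_natCast,
          ← ENNReal.ofReal_mul (by positivity)]
        apply le_of_eq; congr 1; push_cast; field_simp
    refine (mul_le_mul_right h1 _).trans ?_
    rw [hes, ENNReal.rpow_natCast, ← ENNReal.ofReal_pow hδ0, ← ENNReal.ofReal_mul (by positivity),
      ← mul_pow]
    apply ENNReal.ofReal_le_ofReal
    have h1δ : 0 < 1 - δ := by linarith
    have : (1 - r) ^ 2 * (δ / (1 - δ) ^ 2) ≤ δ := by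
      rw [← mul_div_assoc, div_le_iff₀ (by positivity), mul_comm]
      gcongr
    exact pow_le_pow_left₀ (by positivity) this n
  have ht : Filter.Tendsto (fun r : ℝ => ENNReal.ofReal (((1 - r) ^ 2) ^ n) * σ univ)
      (nhdsWithin 0 (Ioi 0)) (nhds (1 * σ univ)) := by
    refine ENNReal.Tendsto.mul_const ?_ (Or.inl one_ne_zero)
    have : Continuous (fun r : ℝ => ENNReal.ofReal (((1 - r) ^ 2) ^ n)) :=
      ENNReal.continuous_ofReal.comp (by fun_prop)
    have h := (this.tendsto 0).mono_left (nhdsWithin_le_nhds (s := Ioi 0))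
    simpa using h
  rw [one_mul] at ht
  refine le_of_tendsto ht ?_
  filter_upwards [Ioo_mem_nhdsGT (zero_lt_one (α := ℝ))] with r hr using key r hr

lemma polar_bound (n : ℕ) (R s : ℝ) (hR : 0 < R) (hs : s < 1/2) :
    ∫⁻ z : EuclideanSpace ℝ (Fin (n+1)),
      ENNReal.ofReal ((Ioc 0 R).indicator (fun r : ℝ => r ^ (-(n:ℝ) - 2 * s)) ‖z‖) =
    (volume : Measure (EuclideanSpace ℝ (Fin (n+1)))).toSphere univ *
      ENNReal.ofReal (R ^ (1 - 2 * s) / (1 - 2 * s)) := by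
  have heq : EqOn (fun y : ℝ => y ^ (Module.finrank ℝ (EuclideanSpace ℝ (Fin (n+1))) - 1) •
      (Ioc 0 R).indicator (fun r : ℝ => r ^ (-(n:ℝ) - 2 * s)) y)
      ((Ioc 0 R).indicator (fun r : ℝ => r ^ (- 2 * s))) (Ioi 0) := by
    intro y hy
    have hy : 0 < y := hy
    by_cases h : y ∈ Ioc 0 R
    · simp only [indicator_of_mem h, finrank_euclideanSpace, Fintype.card_fin, smul_eq_mul]
      rw [Nat.add_sub_cancel, ← Real.rpow_natCast, ← Real.rpow_add hy]
      congr 1; ring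
    · simp [indicator_of_notMem h]
  have hint : IntegrableOn (fun r : ℝ => r ^ (- 2 * s)) (Ioc 0 R) := by
    rw [← intervalIntegrable_iff_integrableOn_Ioc_of_le hR.le]
    exact intervalIntegral.intervalIntegrable_rpow' (by linarith)
  have hint2 : IntegrableOn ((Ioc 0 R).indicator (fun r : ℝ => r ^ (- 2 * s))) (Ioi 0) :=
    ((integrable_indicator_iff measurableSet_Ioc).2 hint).integrableOn
  rw [← ofReal_integral_eq_lintegral_ofReal]
  · rw [integral_fun_norm_addHaar, setIntegral_congr_fun measurableSet_Ioi heq,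
      setIntegral_indicator measurableSet_Ioc, inter_eq_self_of_subset_right Ioc_subset_Ioi_self,
      ← intervalIntegral.integral_of_le hR.le, integral_rpow (Or.inl (by linarith)),
      Real.zero_rpow (by linarith), ← smul_assoc, smul_eq_mul, nsmul_eq_mul,
      ← Measure.toSphere_real_apply_univ, ENNReal.ofReal_mul (by positivity), measureReal_def,
      ENNReal.ofReal_toReal (measure_ne_top _ _)]
    congr 3
    · rw [sub_zero]; congr 1; ring
    · ring
  · exact (integrable_fun_norm_addHaar volume).2 ((integrableOn_congr_fun heq measurableSet_Ioi).2 hint2)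
  · filter_upwards with z
    apply indicator_nonneg
    intro r hr
    exact Real.rpow_nonneg hr.1.le _

theorem fractional_sobolev_seminorm_bound
    (d : ℕ) (hd : 1 ≤ d)
    (Q : Set (EuclideanSpace ℝ (Fin d)))
    (hQb : Bornology.IsBounded Q) (hQm : MeasurableSet Q)
    (R : ℝ) (hR : R = Metric.diam Q) (hRpos : 0 < R)
    (c : ℝ) (hc : 0 < c) (A B : ℝ) (hA : 0 ≤ A) (hB : 0 ≤ B)
    (v : EuclideanSpace ℝ (Fin d) → ℝ) (hv : Measurable v)
    (hshift : ∀ e : EuclideanSpace ℝ (Fin d), ‖e‖ = 1 → ∀ η ∈ Set.Ioc (0:ℝ) R,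
      ∫⁻ x in Q, ENNReal.ofReal (|v x - v (x + η • e)| ^ 2) ≤
        ENNReal.ofReal (η * (1 + 1 / c) * (η * A + B))) :
    ∀ s : ℝ, s ∈ Set.Ico (0:ℝ) (1/2) →
      ∫⁻ x in Q, ∫⁻ y in Q \ {x},
          ENNReal.ofReal (|v x - v y| ^ 2 / ‖x - y‖ ^ ((d : ℝ) + 2 * s)) ≤
        ENNReal.ofReal ((1 + 1 / c) * max R 1) *
          μH[(d : ℝ) - 1] (Metric.sphere (0 : EuclideanSpace ℝ (Fin d)) 1) *
          ENNReal.ofReal (R ^ (1 - 2 * s) / (1 - 2 * s)) *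
          ENNReal.ofReal (A + B) := by
  intro s hs
  obtain ⟨n, rfl⟩ : ∃ n, d = n + 1 := ⟨d - 1, by omega⟩
  have hn : ((n + 1 : ℕ) : ℝ) - 1 = n := by push_cast; ring
  rw [hn]
  set p : ℝ := ((n + 1 : ℕ) : ℝ) + 2 * s with hp
  set K : ℝ := (1 + 1 / c) * max R 1 * (A + B) with hK
  set W : Set (EuclideanSpace ℝ (Fin (n+1))) := {z | ‖z‖ ∈ Ioc 0 R} with hW
  have hWm : MeasurableSet W := measurable_norm measurableSet_Ioc
  set G : EuclideanSpace ℝ (Fin (n+1)) → EuclideanSpace ℝ (Fin (n+1)) → ℝ≥0∞ := fun x z =>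
    ENNReal.ofReal (|v x - v (x + z)| ^ 2) * ENNReal.ofReal (‖z‖ ^ (-p)) with hG
  have step1 : ∀ x ∈ Q, ∫⁻ y in Q \ {x},
      ENNReal.ofReal (|v x - v y| ^ 2 / ‖x - y‖ ^ p) ≤ ∫⁻ z in W, G x z := by
    intro x hx
    rw [← lintegral_indicator (hQm.diff (measurableSet_singleton x)),
      ← lintegral_add_left_eq_self _ x, ← lintegral_indicator hWm]
    apply lintegral_mono
    intro z
    beta_reduce
    by_cases h : x + z ∈ Q \ {x}
    · have hz : z ∈ W := by
        refine ⟨norm_pos_iff.2 ?_, ?_⟩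
        · rintro rfl; simp at h
        · have := Metric.dist_le_diam_of_mem hQb h.1 hx
          rw [← hR, dist_eq_norm] at this
          simpa using this
      rw [indicator_of_mem h, indicator_of_mem hz, hG]
      simp only
      rw [← ENNReal.ofReal_mul (by positivity), Real.rpow_neg (norm_nonneg _), ← div_eq_mul_inv]
      simp
    · rw [indicator_of_notMem h]; exact zero_le
  have step2 : ∀ z ∈ W, ∫⁻ x in Q, G x z ≤
      ENNReal.ofReal K *
        ENNReal.ofReal ((Ioc 0 R).indicator (fun r : ℝ => r ^ (-(n:ℝ) - 2 * s)) ‖z‖) := by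
    intro z hz
    have hz0 : 0 < ‖z‖ := hz.1
    simp only [hG]
    rw [lintegral_mul_const' _ _ ENNReal.ofReal_ne_top]
    have h := hshift (‖z‖⁻¹ • z) (by rw [norm_smul]; simp [hz0.ne']) ‖z‖ hz
    rw [smul_smul, mul_inv_cancel₀ hz0.ne', one_smul] at h
    refine (mul_le_mul_left h _).trans ?_
    rw [indicator_of_mem (show ‖z‖ ∈ Ioc 0 R from hz), ← ENNReal.ofReal_mul (by positivity),
      ← ENNReal.ofReal_mul (by positivity)]
    apply ENNReal.ofReal_le_ofReal
    have e1 : ‖z‖ ^ (-(n:ℝ) - 2 * s) = ‖z‖ * ‖z‖ ^ (-p) := by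
      nth_rewrite 2 [← Real.rpow_one ‖z‖]
      rw [← Real.rpow_add hz0]
      congr 1; rw [hp]; push_cast; ring
    have e2 : ‖z‖ * A + B ≤ max R 1 * (A + B) := by
      have h1 : ‖z‖ ≤ max R 1 := hz.2.trans (le_max_left _ _)
      have h2 : 1 ≤ max R 1 := le_max_right _ _
      nlinarith
    rw [e1, hK]
    have : 0 ≤ ‖z‖ * (1 + 1/c) * ‖z‖ ^ (-p) := by positivity
    nlinarith [mul_le_mul_of_nonneg_left e2 this]
  have hGm : Measurable (Function.uncurry G) := by
    simp only [hG, Function.uncurry_def]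
    fun_prop
  calc _ ≤ ∫⁻ x in Q, ∫⁻ z in W, G x z := setLIntegral_mono' hQm step1
    _ = ∫⁻ z in W, ∫⁻ x in Q, G x z := lintegral_lintegral_swap hGm.aemeasurable
    _ ≤ ∫⁻ z in W, ENNReal.ofReal K *
        ENNReal.ofReal ((Ioc 0 R).indicator (fun r : ℝ => r ^ (-(n:ℝ) - 2 * s)) ‖z‖) :=
      setLIntegral_mono' hWm step2
    _ ≤ ∫⁻ z, ENNReal.ofReal K *
        ENNReal.ofReal ((Ioc 0 R).indicator (fun r : ℝ => r ^ (-(n:ℝ) - 2 * s)) ‖z‖) :=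
      setLIntegral_le_lintegral _ _
    _ = ENNReal.ofReal K * ((volume : Measure (EuclideanSpace ℝ (Fin (n+1)))).toSphere univ *
      ENNReal.ofReal (R ^ (1 - 2 * s) / (1 - 2 * s))) := by
      rw [lintegral_const_mul' _ _ ENNReal.ofReal_ne_top, polar_bound n R s hRpos hs.2]
    _ ≤ ENNReal.ofReal K * (μH[(n:ℝ)] (Metric.sphere (0 : EuclideanSpace ℝ (Fin (n+1))) 1) *
      ENNReal.ofReal (R ^ (1 - 2 * s) / (1 - 2 * s))) := by
      gcongr
      exact sphere_le n
    _ = _ := by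
      rw [hK, ENNReal.ofReal_mul (by positivity)]
      ring
end
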